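/- In a finite graph G with n vertices and maximum degree Δ ≥ 1, the number of connected vertex subsets of size k ≥ 1 is at most n · Δ^{2k−2}. -/

import Mathlib

/-!
A connected set `S` of `k` vertices is the support of a closed walk of length `2 * (k - 1)` based at
any prescribed `v ∈ S`: as long as the walk misses a vertex of `S`, some edge of `G[S]` leaves its
support, and a detour along that edge and back adds one vertex and two steps. A set is thus
determined by its base vertex and a choice among at most `Δ` neighbours at each step.
-/

open SimpleGraph

section ConnectedSets

variable {V : Type*} {G : SimpleGraph V}

theorem exists_adj_mem_diff_of_ssubset_of_preconnected_induce {s t : Set V}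
    (hs : (G.induce s).Preconnected) (hts : t ⊂ s) (ht : t.Nonempty) :
    ∃ x ∈ t, ∃ y ∈ s \ t, G.Adj x y := by
  obtain ⟨a, ha⟩ := ht
  obtain ⟨b, hbs, hbt⟩ := Set.exists_of_ssubset hts
  obtain ⟨p⟩ := hs ⟨a, hts.subset ha⟩ ⟨b, hbs⟩
  obtain ⟨d, -, hfst, hsnd⟩ := p.exists_boundary_dart (Subtype.val ⁻¹' t) ha hbt
  exact ⟨d.fst, hfst, d.snd, ⟨d.snd.2, hsnd⟩, d.adj⟩

variable [DecidableEq V]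

theorem exists_walk_support_eq_insert {u v x y : V} (p : G.Walk u v) (hx : x ∈ p.support)
    (hxy : G.Adj x y) :
    ∃ q : G.Walk u v, q.length = p.length + 2 ∧
      q.support.toFinset = insert y p.support.toFinset := by
  obtain ⟨p₁, p₂, rfl⟩ := Walk.mem_support_iff_exists_append.mp hx
  refine ⟨p₁.append (.cons hxy (.cons hxy.symm p₂)), ?_, ?_⟩
  · simp only [Walk.length_append, Walk.length_cons]
    ring
  · have hx₁ : x ∈ p₁.support := p₁.end_mem_support
    ext z
    simp only [List.mem_toFinset, Walk.mem_support_append_iff, Walk.support_cons, List.mem_cons,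
      Finset.mem_insert]
    grind

theorem exists_closed_walk_card_support_eq_succ {S : Finset V} {v : V}
    (hS : (G.induce (S : Set V)).Preconnected) (hv : v ∈ S) {j : ℕ} (hj : j < S.card) :
    ∃ p : G.Walk v v, p.length = 2 * j ∧ p.support.toFinset ⊆ S ∧
      p.support.toFinset.card = j + 1 := by
  induction j with
  | zero => exact ⟨.nil, by simp, by simpa using hv, by simp⟩
  | succ j ih =>
    obtain ⟨p, hlen, hsub, hcard⟩ := ih (by omega)
    have hssub : p.support.toFinset ⊂ S :=
      hsub.ssubset_of_ne fun h => by rw [h] at hcard; omega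
    obtain ⟨x, hx, y, ⟨hyS, hyp⟩, hxy⟩ :=
      exists_adj_mem_diff_of_ssubset_of_preconnected_induce hS (Finset.coe_ssubset.mpr hssub)
        ⟨v, by simp⟩
    obtain ⟨q, hqlen, hqsupp⟩ := exists_walk_support_eq_insert p (by simpa using hx) hxy
    refine ⟨q, by omega, hqsupp ▸ Finset.insert_subset hyS hsub, ?_⟩
    rw [hqsupp, Finset.card_insert_of_notMem hyp, hcard]

theorem exists_closed_walk_support_eq {S : Finset V} {v : V}
    (hS : (G.induce (S : Set V)).Preconnected) (hv : v ∈ S) :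
    ∃ p : G.Walk v v, p.length = 2 * S.card - 2 ∧ p.support.toFinset = S := by
  have hpos : 0 < S.card := Finset.card_pos.mpr ⟨v, hv⟩
  obtain ⟨p, hlen, hsub, hcard⟩ :=
    exists_closed_walk_card_support_eq_succ hS hv (j := S.card - 1) (by omega)
  exact ⟨p, by omega, Finset.eq_of_subset_of_card_le hsub (by omega)⟩

end ConnectedSets

section WalkSupports

variable {V : Type*} [DecidableEq V] (G : SimpleGraph V) [G.LocallyFinite]

/-- The vertex sets of the walks of length `m` starting at `v`. They are generated by recursion on
the first step rather than cut out of a type of walks, so that local finiteness is enough to make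
them a `Finset` and the bound on their number is an induction on `m`. -/
def walkSupports : ℕ → V → Finset (Finset V)
  | 0, v => {{v}}
  | m + 1, v => (G.neighborFinset v).biUnion fun u => (walkSupports m u).image (insert v)

theorem support_toFinset_mem_walkSupports {u v : V} (p : G.Walk u v) :
    p.support.toFinset ∈ walkSupports G p.length u := by
  induction p with
  | nil => simp [walkSupports]
  | @cons u w _ h p ih =>
    simp only [Walk.length_cons, walkSupports, Finset.mem_biUnion, Finset.mem_image,
      mem_neighborFinset]
    exact ⟨w, h, _, ih, by simp⟩

theorem card_walkSupports_le {Δ : ℕ} (hΔ : ∀ v, G.degree v ≤ Δ) (m : ℕ) (v : V) :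
    (walkSupports G m v).card ≤ Δ ^ m := by
  induction m generalizing v with
  | zero => simp [walkSupports]
  | succ m ih =>
    calc (walkSupports G (m + 1) v).card
        ≤ G.degree v * Δ ^ m :=
          Finset.card_biUnion_le_card_mul _ _ _ fun u _ => Finset.card_image_le.trans (ih u)
      _ ≤ Δ * Δ ^ m := Nat.mul_le_mul_right _ (hΔ v)
      _ = Δ ^ (m + 1) := (pow_succ' Δ m).symm

end WalkSupports

theorem stmt_7_general {V : Type*} (G : SimpleGraph V) [G.LocallyFinite] {Δ : ℕ} (k : ℕ)
    (hΔ : ∀ v, G.degree v ≤ Δ) (R : Finset V) :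
    {S : Finset V | S.card = k ∧ (G.induce (S : Set V)).Connected ∧ ∃ v ∈ R, v ∈ S}.encard
      ≤ (R.card * Δ ^ (2 * k - 2) : ℕ) := by
  classical
  have hsub : {S : Finset V | S.card = k ∧ (G.induce (S : Set V)).Connected ∧ ∃ v ∈ R, v ∈ S}
      ⊆ R.biUnion (walkSupports G (2 * k - 2)) := by
    rintro S ⟨rfl, hS, v, hvR, hvS⟩
    obtain ⟨p, hlen, hsupp⟩ := exists_closed_walk_support_eq hS.preconnected hvS
    have hmem := support_toFinset_mem_walkSupports G p
    rw [hlen, hsupp] at hmem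
    exact Finset.mem_biUnion.mpr ⟨v, hvR, hmem⟩
  refine (Set.encard_le_encard hsub).trans ?_
  rw [Set.encard_coe_eq_coe_finsetCard, Nat.cast_le]
  exact Finset.card_biUnion_le_card_mul _ _ _ fun v _ => card_walkSupports_le G hΔ _ v

/-- In a graph with n vertices and maximum degree Δ ≥ 1, the number of connected
vertex subsets of size k ≥ 1 is at most n · Δ^(2k-2). -/
theorem stmt_7 {V : Type*} [Fintype V] [DecidableEq V]
    (G : SimpleGraph V) [DecidableRel G.Adj] (Δ k : ℕ)
    (hΔ : ∀ v, G.degree v ≤ Δ) (hΔ1 : 1 ≤ Δ) (hk : 1 ≤ k) :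
    Nat.card {S : Finset V // S.card = k ∧ (G.induce (↑S : Set V)).Connected}
      ≤ Fintype.card V * Δ ^ (2 * k - 2) := by
  have hcount :=
    (Set.encard_le_coe_iff_finite_ncard_le.mp (stmt_7_general G k hΔ Finset.univ)).2
  refine hcount.trans' (Nat.card_mono (Set.toFinite _) fun S ⟨hcard, hS⟩ => ?_)
  obtain ⟨v, hv⟩ : S.Nonempty := Finset.card_pos.mp (hcard ▸ hk)
  exact ⟨hcard, hS, v, Finset.mem_univ v, hv⟩
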